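/- For every real b ≥ 0 and every integer d ≥ 3, for infinitely many integers m > 0 there are more than b^m pairwise non-isomorphic d-regular d-connected graphs on m vertices. -/

import Mathlib

open SimpleGraph

/-- `d`-regular and stays connected after removing fewer than `d` vertices. -/
def GoodGraph {V : Type} (d : ℕ) (G : SimpleGraph V) : Prop :=
  (∀ v, (G.neighborSet v).ncard = d) ∧
    ∀ s : Set V, s.ncard < d → (G.induce sᶜ).Connected

/-- Two copies of `G` joined by the matching given by `π`. -/
def permGraph {V : Type} (G : SimpleGraph V) (π : Equiv.Perm V) : SimpleGraph (V ⊕ V) where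
  Adj x y := match x, y with
    | .inl a, .inl b => G.Adj a b
    | .inr a, .inr b => G.Adj a b
    | .inl a, .inr b => b = π a
    | .inr a, .inl b => a = π b
  symm := ⟨by
    rintro (a | a) (b | b) h
    · exact SimpleGraph.Adj.symm h
    · exact h
    · exact h
    · exact SimpleGraph.Adj.symm h⟩
  loopless := ⟨by
    rintro (a | a) h
    · exact G.irrefl h
    · exact G.irrefl h⟩

lemma goodGraph_iso {V W : Type} {d : ℕ} {G : SimpleGraph V} {H : SimpleGraph W}
    (e : G ≃g H) (h : GoodGraph d G) : GoodGraph d H := by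
  refine ⟨fun w => ?_, fun s hs => ?_⟩
  · rw [← h.1 (e.symm w)]
    have : G.neighborSet (e.symm w) = e.symm '' (H.neighborSet w) := by
      ext x
      constructor
      · intro hx
        refine ⟨e x, ?_, by simp⟩
        have := e.map_adj_iff.2 hx
        simpa using this
      · rintro ⟨y, hy, rfl⟩
        exact e.symm.map_adj_iff.2 hy
    rw [this, Set.ncard_image_of_injective _ e.symm.injective]
  · have h1 : (e.symm '' s).ncard < d := by
      rwa [Set.ncard_image_of_injective _ e.symm.injective]
    have h2 := h.2 _ h1
    have hm : ∀ x : V, x ∈ (e.symm '' s)ᶜ → e x ∈ sᶜ := by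
      intro x hx hs'
      exact hx ⟨e x, hs', by simp⟩
    let f : G.induce (e.symm '' s)ᶜ →g H.induce sᶜ :=
      { toFun := fun x => ⟨e x.1, hm x.1 x.2⟩
        map_rel' := by
          intro a b hab
          exact e.map_adj_iff.2 hab }
    refine h2.map f ?_
    rintro ⟨y, hy⟩
    refine ⟨⟨e.symm y, ?_⟩, ?_⟩
    · rintro ⟨z, hz, hz'⟩
      exact hy (e.symm.injective hz' ▸ hz)
    · exact Subtype.ext (e.apply_symm_apply y)

lemma goodGraph_perm {V : Type} [Finite V] {d : ℕ} {G : SimpleGraph V}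
    (h : GoodGraph d G) (hd : 0 < d) (hV : d < Nat.card V) (π : Equiv.Perm V) :
    GoodGraph (d + 1) (permGraph G π) := by
  classical
  refine ⟨?_, fun s hs => ?_⟩
  · rintro (a | a)
    · have : (permGraph G π).neighborSet (.inl a) =
          insert (Sum.inr (π a)) (Sum.inl '' G.neighborSet a) := by
        ext (b | b) <;> simp [permGraph]
      rw [this, Set.ncard_insert_of_notMem (by simp) (Set.toFinite _),
        Set.ncard_image_of_injective _ Sum.inl_injective, h.1]
    · have : (permGraph G π).neighborSet (.inr a) =
          insert (Sum.inl (π.symm a)) (Sum.inr '' G.neighborSet a) := by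
        ext (b | b) <;> simp [permGraph, Equiv.eq_symm_apply, eq_comm]
      rw [this, Set.ncard_insert_of_notMem (by simp) (Set.toFinite _),
        Set.ncard_image_of_injective _ Sum.inr_injective, h.1]
  · set s1 : Set V := Sum.inl ⁻¹' s with hs1
    set s2 : Set V := Sum.inr ⁻¹' s with hs2
    have hcard : s.ncard = s1.ncard + s2.ncard := by
      have : s = Sum.inl '' s1 ∪ Sum.inr '' s2 := by
        ext (b | b) <;> simp [hs1, hs2]
      conv_lhs => rw [this]
      rw [Set.ncard_union_eq _ (Set.toFinite _) (Set.toFinite _),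
        Set.ncard_image_of_injective _ Sum.inl_injective,
        Set.ncard_image_of_injective _ Sum.inr_injective]
      rw [Set.disjoint_left]
      rintro _ ⟨x, _, rfl⟩ ⟨y, _, hy⟩
      cases hy
    let K := (permGraph G π).induce sᶜ
    let L : ∀ a : V, a ∉ s1 → ↥(sᶜ) := fun a ha => ⟨Sum.inl a, ha⟩
    let R : ∀ a : V, a ∉ s2 → ↥(sᶜ) := fun a ha => ⟨Sum.inr a, ha⟩
    have hL : s1.ncard < d → ∀ a b ha hb, K.Reachable (L a ha) (L b hb) := by
      intro hlt a b ha hb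
      let f : G.induce s1ᶜ →g K :=
        { toFun := fun x => L x.1 x.2
          map_rel' := fun {a b} hab => hab }
      exact ((h.2 s1 hlt).preconnected ⟨a, ha⟩ ⟨b, hb⟩).map f
    have hR : s2.ncard < d → ∀ a b ha hb, K.Reachable (R a ha) (R b hb) := by
      intro hlt a b ha hb
      let f : G.induce s2ᶜ →g K :=
        { toFun := fun x => R x.1 x.2
          map_rel' := fun {a b} hab => hab }
      exact ((h.2 s2 hlt).preconnected ⟨a, ha⟩ ⟨b, hb⟩).map f
    have hLR : ∀ a ha ha', K.Reachable (L a ha) (R (π a) ha') := by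
      intro a ha ha'
      exact Adj.reachable (show K.Adj (L a ha) (R (π a) ha') from (rfl : π a = π a))
    -- there is a surviving matching edge
    obtain ⟨c, hc1, hc2⟩ : ∃ c, c ∉ s1 ∧ π c ∉ s2 := by
      by_contra! hcon
      have h1 : (Set.univ : Set V) ⊆ s1 ∪ π.symm '' s2 := by
        intro x _
        by_cases hx : x ∈ s1
        · exact Or.inl hx
        · exact Or.inr ⟨π x, hcon x hx, by simp⟩
      have h2 := Set.ncard_le_ncard h1 (Set.toFinite _)
      have h3 := Set.ncard_union_le s1 (π.symm '' s2)
      rw [Set.ncard_image_of_injective _ π.symm.injective] at h3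
      rw [Set.ncard_univ] at h2
      omega
    have key : ∀ x : ↥(sᶜ), K.Reachable x (L c hc1) := by
      by_cases c1 : s1.ncard < d
      · by_cases c2 : s2.ncard < d
        · rintro ⟨a | a, ha⟩
          · exact hL c1 a c ha hc1
          · exact (hR c2 a (π c) ha hc2).trans (hLR c hc1 hc2).symm
        · have : s1.ncard = 0 := by omega
          rw [Set.ncard_eq_zero (Set.toFinite _)] at this
          rintro ⟨a | a, ha⟩
          · exact hL c1 a c ha hc1
          · have h0 : π.symm a ∉ s1 := by simp [this]
            have h1 := hLR (π.symm a) h0 (by rw [Equiv.apply_symm_apply]; exact ha)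
            have h2 : K.Reachable (L _ h0) (R a ha) := by
              simpa using h1
            exact h2.symm.trans (hL c1 _ c h0 hc1)
      · have : s2.ncard = 0 := by omega
        have c2 : s2.ncard < d := by omega
        rw [Set.ncard_eq_zero (Set.toFinite _)] at this
        rintro ⟨a | a, ha⟩
        · exact (hLR a ha (by simp [this])).trans
            ((hR c2 _ (π c) _ hc2).trans (hLR c hc1 hc2).symm)
        · exact (hR c2 a (π c) ha hc2).trans (hLR c hc1 hc2).symm
    have : Nonempty ↥(sᶜ) := ⟨L c hc1⟩
    exact ⟨fun x y => (key x).trans (key y).symm⟩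

lemma goodGraph_cycle (n : ℕ) : GoodGraph 2 (cycleGraph (n + 3)) := by
  refine ⟨fun v => ?_, fun s hs => ?_⟩
  · have := cycleGraph_degree_three_le (n := n) (v := v)
    rw [← this, ← card_neighborSet_eq_degree, Set.ncard_eq_toFinset_card', Set.toFinset_card]
  · have hne : ∃ x, s ⊆ {x} := by
      rcases Nat.lt_succ_iff_lt_or_eq.1 hs with h | h
      · have : s = ∅ := (Set.ncard_eq_zero (Set.toFinite _)).1 (by omega)
        exact ⟨0, by simp [this]⟩
      · obtain ⟨x, hx⟩ := Set.ncard_eq_one.1 h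
        exact ⟨x, hx.le⟩
    obtain ⟨x, hx⟩ := hne
    have hstep : ∀ y : Fin (n+3), (cycleGraph (n+3)).Adj y (y + 1) := by
      intro y
      rw [cycleGraph_adj]
      right; simp
    have hne' : ∀ i : ℕ, i < n + 2 → x + 1 + (Fin.ofNat (n+3) i) ≠ x := by
      intro i hi h
      rw [add_assoc, add_eq_left] at h
      have := congrArg Fin.val h
      simp [Fin.val_add] at this
      rw [Nat.mod_eq_of_lt (by omega)] at this
      omega
    have hns : ∀ y, y ≠ x → y ∉ s := fun y hy hys => hy (hx hys)
    let P : ∀ i : ℕ, i < n + 2 → ↥(sᶜ) := fun i hi => ⟨_, hns _ (hne' i hi)⟩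
    have hP : ∀ i hi, ((cycleGraph (n+3)).induce sᶜ).Reachable (P i hi) (P 0 (by omega)) := by
      intro i
      induction i with
      | zero => intro _; exact Reachable.refl _
      | succ i ih =>
        intro hi
        refine Reachable.trans (Adj.reachable ?_) (ih (by omega))
        have := (hstep (x + 1 + Fin.ofNat (n+3) i)).symm
        have e : x + 1 + Fin.ofNat (n+3) i + 1 = x + 1 + Fin.ofNat (n+3) (i+1) := by
          rw [add_assoc (x+1)]
          congr 1
          ext
          simp [Fin.val_add]
        rw [e] at this
        exact this
    have hall : ∀ y : Fin (n+3), y ≠ x → ∃ i, ∃ _ : i < n + 2, y = x + 1 + Fin.ofNat (n+3) i := by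
      intro y hy
      refine ⟨(y - (x + 1)).val, ?_, ?_⟩
      · by_contra hcon
        have h1 : (y - (x+1)).val = n + 2 := by have := (y - (x+1)).isLt; omega
        have h2 : y - (x + 1) + 1 = 0 := by
          ext; simp [Fin.val_add, h1]
        apply hy
        have : y - x = 0 := by rw [← h2]; abel
        exact sub_eq_zero.1 this
      · simp
    have key : ∀ y : ↥(sᶜ), ((cycleGraph (n+3)).induce sᶜ).Reachable y (P 0 (by omega)) := by
      rintro ⟨y, hy⟩
      by_cases hyx : y = x
      · have a1 := hstep y
        have h0 : (⟨y, hy⟩ : ↥(sᶜ)) = ⟨y, hy⟩ := rfl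
        apply Adj.reachable
        subst hyx
        show (cycleGraph (n+3)).Adj y (y + 1 + Fin.ofNat (n+3) 0)
        simpa using a1
      · obtain ⟨i, hi, rfl⟩ := hall y hyx
        exact hP i hi
    have : Nonempty ↥(sᶜ) := ⟨P 0 (by omega)⟩
    exact ⟨fun x y => (key x).trans (key y).symm⟩

lemma exists_good (d : ℕ) (hd : 2 ≤ d) : ∀ N : ℕ, ∃ (V : Type) (_ : Fintype V)
    (G : SimpleGraph V), N < Fintype.card V ∧ GoodGraph d G := by
  induction d, hd using Nat.le_induction with
  | base =>
    intro N
    exact ⟨Fin (N + 3), inferInstance, cycleGraph (N+3), by simp, goodGraph_cycle N⟩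
  | succ d hd ih =>
    intro N
    obtain ⟨V, _, G, hN, hG⟩ := ih (N + d)
    refine ⟨V ⊕ V, inferInstance, permGraph G 1, ?_, goodGraph_perm hG (by omega) ?_ 1⟩
    · simp; omega
    · rw [Nat.card_eq_fintype_card]; omega

lemma exists_code {V W : Type} [Finite W] {d : ℕ} (hd : d ≠ 0) {G : SimpleGraph V}
    (hG : G.Connected) {H : SimpleGraph W} (hH : ∀ w, (H.neighborSet w).ncard = d) :
    ∃ c : (V → W) → W × (V → Fin d), ∀ f g : V → W,
      (∀ u v, G.Adj u v → H.Adj (f u) (f v)) → (∀ u v, G.Adj u v → H.Adj (g u) (g v)) →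
      c f = c g → f = g := by
  classical
  obtain ⟨r⟩ := hG.nonempty
  have hp : ∀ v, ∃ u, v ≠ r → G.Adj u v ∧ G.dist r u < G.dist r v := by
    intro v
    by_cases hv : v = r
    · exact ⟨r, fun h => absurd hv h⟩
    · obtain ⟨p, hp⟩ := (hG.preconnected v r).exists_walk_length_eq_dist
      cases p with
      | nil => exact absurd rfl hv
      | @cons _ u _ h q =>
        refine ⟨u, fun _ => ⟨h.symm, ?_⟩⟩
        rw [dist_comm, dist_comm (u := r) (v := v), ← hp]
        have := dist_le q
        simp
        omega
  choose p hp using hp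
  have hidx : ∀ w, ∃ i : W → ℕ, (∀ x ∈ H.neighborSet w, i x < d) ∧
      Set.InjOn i (H.neighborSet w) := by
    intro w
    have e : (H.neighborSet w) ≃ Fin d :=
      Finite.equivFinOfCardEq (by rw [Nat.card_coe_set_eq]; exact hH w)
    refine ⟨fun x => if h : x ∈ H.neighborSet w then (e ⟨x, h⟩).val else 0, ?_, ?_⟩
    · intro x hx
      simp only [hx, dif_pos]
      exact (e _).isLt
    · intro x hx y hy hxy
      simp only [hx, hy, dif_pos] at hxy
      have := e.injective (Fin.ext hxy)
      simpa using this
  choose i hi hinj using hidx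
  have : NeZero d := ⟨hd⟩
  refine ⟨fun f => (f r, fun v => Fin.ofNat d (i (f (p v)) (f v))), fun f g hf hg h => ?_⟩
  simp only [Prod.mk.injEq] at h
  have key : ∀ n v, G.dist r v = n → f v = g v := by
    intro n
    induction n using Nat.strong_induction_on with
    | _ n ih =>
      intro v hv
      by_cases hvr : v = r
      · rw [hvr]; exact h.1
      · obtain ⟨h1, h2⟩ := hp v hvr
        have h3 := ih _ (hv ▸ h2) (p v) rfl
        have h4 := congrFun h.2 v
        have f1 : f v ∈ H.neighborSet (f (p v)) := hf _ _ h1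
        have g1 : g v ∈ H.neighborSet (f (p v)) := h3 ▸ hg _ _ h1
        rw [← h3] at h4
        have h5 := congrArg Fin.val h4
        simp only [Fin.val_ofNat] at h5
        rw [Nat.mod_eq_of_lt (hi _ _ f1), Nat.mod_eq_of_lt (hi _ _ g1)] at h5
        exact hinj _ f1 g1 h5
  exact funext fun v => key _ v rfl

lemma permGraph_injective {V : Type} (G : SimpleGraph V) : Function.Injective (permGraph G) := by
  intro π σ h
  ext a
  have : (permGraph G π).Adj (.inl a) (.inr (π a)) := (rfl : π a = π a)
  rw [h] at this
  exact this

lemma count_bound (C : ℝ) : ∃ N : ℕ, ∀ n, N ≤ n → C ^ n < n.factorial := by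
  have h := FloorSemiring.tendsto_pow_div_factorial_atTop C
  have h2 := h.eventually (gt_mem_nhds (zero_lt_one))
  obtain ⟨N, hN⟩ := Filter.eventually_atTop.1 h2
  refine ⟨N, fun n hn => ?_⟩
  have := hN n hn
  rwa [div_lt_one (by positivity)] at this

/-- For every real `b ≥ 0` and integer `d ≥ 3`, for infinitely many `m > 0`
there are more than `b^m` pairwise non-isomorphic `d`-regular `d`-connected
graphs on `m` vertices. -/
theorem many_regular_connected_graphs (b : ℝ) (hb : 0 ≤ b) (d : ℕ) (hd : 3 ≤ d) :
    ∀ N : ℕ, ∃ m : ℕ, N < m ∧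
      ∃ S : Finset (SimpleGraph (Fin m)),
        b ^ m < (S.card : ℝ) ∧
        (∀ G ∈ S,
          (∀ v : Fin m, (G.neighborSet v).ncard = d) ∧
          d < m ∧
          (∀ s : Set (Fin m), s.ncard < d → (G.induce sᶜ).Connected)) ∧
        (∀ G ∈ S, ∀ H ∈ S, G ≠ H → IsEmpty (G ≃g H)) := by
  classical
  intro N
  obtain ⟨N₁, hN₁⟩ := count_bound (4 * b ^ 2 * d ^ 2)
  obtain ⟨V, _, G, hcard, hG⟩ := exists_good (d - 1) (by omega) (N + N₁ + d)
  set n := Fintype.card V with hn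
  have hgood : ∀ π, GoodGraph d (permGraph G π) := by
    intro π
    have := goodGraph_perm hG (by omega) (by rw [Nat.card_eq_fintype_card]; omega) π
    rwa [show d - 1 + 1 = d by omega] at this
  have hconn : G.Connected := by
    have h1 := hG.2 ∅ (by simp; omega)
    let f : G.induce (∅ : Set V)ᶜ →g G :=
      { toFun := fun x => x.1
        map_rel' := fun {a b} hab => hab }
    exact h1.map f (fun y => ⟨⟨y, by simp⟩, rfl⟩)
  have e : V ⊕ V ≃ Fin (n + n) := Fintype.equivFinOfCardEq (by simp [hn])
  let F : Equiv.Perm V → SimpleGraph (Fin (n + n)) := fun π => (permGraph G π).map e.toEmbedding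
  have iF : ∀ π, Nonempty (permGraph G π ≃g F π) := fun π => ⟨SimpleGraph.Iso.map e _⟩
  let st : Setoid (Equiv.Perm V) :=
    { r := fun π σ => Nonempty (permGraph G π ≃g permGraph G σ)
      iseqv := ⟨fun _ => ⟨SimpleGraph.Iso.refl⟩, fun ⟨h⟩ => ⟨h.symm⟩,
        fun ⟨h⟩ ⟨h'⟩ => ⟨h'.comp h⟩⟩ }
  let Q := Quotient st
  have hiso : ∀ q q' : Q, Nonempty (F q.out ≃g F q'.out) → q = q' := by
    rintro q q' ⟨h⟩
    obtain ⟨i1⟩ := iF q.out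
    obtain ⟨i2⟩ := iF q'.out
    rw [← Quotient.out_eq q, ← Quotient.out_eq q']
    exact Quotient.sound ⟨i2.symm.comp (h.comp i1)⟩
  -- counting
  have hcount : n.factorial ≤ Fintype.card Q * ((n + n) * d ^ n) ^ 2 := by
    have hc := fun π => exists_code (show d ≠ 0 by omega) hconn (hgood π).1
    choose c hc using hc
    have hφ : ∀ π : Equiv.Perm V,
        Nonempty (permGraph G π ≃g permGraph G (Quotient.out (Quotient.mk st π))) := by
      intro π
      exact st.symm (Quotient.mk_out π)
    let φ := fun π => (hφ π).some
    let code : Equiv.Perm V → Q × (((V ⊕ V) × (V → Fin d)) × ((V ⊕ V) × (V → Fin d))) :=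
      fun π => (Quotient.mk st π,
        c (Quotient.out (Quotient.mk st π)) (fun v => φ π (.inl v)),
        c (Quotient.out (Quotient.mk st π)) (fun v => φ π (.inr v)))
    have hcode : Function.Injective code := by
      intro π σ h
      have aux : ∀ (τ : Equiv.Perm V) (f : permGraph G π ≃g permGraph G τ)
          (g : permGraph G σ ≃g permGraph G τ),
          c τ (fun v => f (.inl v)) = c τ (fun v => g (.inl v)) →
          c τ (fun v => f (.inr v)) = c τ (fun v => g (.inr v)) → π = σ := by
        intro τ f g h1 h2
        have e1 := hc τ _ _ (fun u v huv => f.map_adj_iff.2 (show (permGraph G π).Adj (.inl u) (.inl v) from huv))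
          (fun u v huv => g.map_adj_iff.2 (show (permGraph G σ).Adj (.inl u) (.inl v) from huv)) h1
        have e2 := hc τ _ _ (fun u v huv => f.map_adj_iff.2 (show (permGraph G π).Adj (.inr u) (.inr v) from huv))
          (fun u v huv => g.map_adj_iff.2 (show (permGraph G σ).Adj (.inr u) (.inr v) from huv)) h2
        have e3 : ∀ x, f x = g x := by
          rintro (v | v)
          · exact congrFun e1 v
          · exact congrFun e2 v
        apply permGraph_injective G
        ext x y
        rw [← f.map_adj_iff, ← g.map_adj_iff, e3, e3]
      simp only [code, Prod.mk.injEq] at h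
      obtain ⟨h0, h1, h2⟩ := h
      have aux' : ∀ (q : Q) (g : permGraph G σ ≃g permGraph G q.out), Quotient.mk st π = q →
          c (Quotient.out (Quotient.mk st π)) (fun v => φ π (.inl v)) =
            c q.out (fun v => g (.inl v)) →
          c (Quotient.out (Quotient.mk st π)) (fun v => φ π (.inr v)) =
            c q.out (fun v => g (.inr v)) → π = σ := by
        rintro q g rfl k1 k2
        exact aux _ _ _ k1 k2
      exact aux' _ _ h0 h1 h2
    have := Fintype.card_le_of_injective code hcode
    simp only [Fintype.card_perm, Fintype.card_prod, Fintype.card_sum, Fintype.card_fun,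
      Fintype.card_fin, ← hn] at this
    rw [pow_two]
    exact this
  refine ⟨n + n, by omega, Finset.univ.image (fun q : Q => F q.out), ?_, ?_, ?_⟩
  · rw [Finset.card_image_of_injective _ (fun q q' h => hiso q q' (by
      rw [h]; exact ⟨SimpleGraph.Iso.refl⟩)), Finset.card_univ]
    by_contra! hcon
    have h1 := hN₁ n (by omega)
    have h2 : (n.factorial : ℝ) ≤ Fintype.card Q * (((n:ℝ) + n) * d ^ n) ^ 2 := by
      exact_mod_cast hcount
    have h3 : ((n:ℝ) + n) ≤ 2 ^ n := by
      have : n + n ≤ 2 ^ n := by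
        obtain ⟨k, hk⟩ : ∃ k, n = k + 1 := ⟨n - 1, by omega⟩
        rw [hk, pow_succ]
        have := Nat.lt_two_pow_self (n := k)
        omega
      exact_mod_cast this
    have h4 : (Fintype.card Q : ℝ) * (((n:ℝ) + n) * d ^ n) ^ 2 ≤
        b ^ (n + n) * (2 ^ n * d ^ n) ^ 2 := by gcongr
    have h5 : b ^ (n + n) * (2 ^ n * (d:ℝ) ^ n) ^ 2 = (4 * b ^ 2 * d ^ 2) ^ n := by
      rw [show (4:ℝ) = 2 ^ 2 by norm_num]
      simp only [mul_pow, ← pow_mul, pow_add, mul_comm n 2]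
      ring
    linarith
  · intro H hH
    obtain ⟨q, _, rfl⟩ := Finset.mem_image.1 hH
    obtain ⟨i⟩ := iF q.out
    have := goodGraph_iso i (hgood q.out)
    exact ⟨this.1, by omega, this.2⟩
  · intro H hH H' hH' hne
    obtain ⟨q, _, rfl⟩ := Finset.mem_image.1 hH
    obtain ⟨q', _, rfl⟩ := Finset.mem_image.1 hH'
    refine ⟨fun i => hne ?_⟩
    rw [hiso q q' ⟨i⟩]
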